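/- Khintchine inequality in L¹ for Rademacher functions: there exists a constant c > 0 such that for every n ∈ ℕ and every a : Fin n → ℝ, c · (Σ_{k<n} (a k)²)^{1/2} ≤ ∫₀¹ |Σ_{k<n} a k · r k t| dt ≤ (Σ_{k<n} (a k)²)^{1/2}, where r k t = (−1)^{⌊2^{k+1} t⌋} is the k-th Rademacher function. -/

import Mathlib

/-- The `k`-th Rademacher function `r k t = (−1)^⌊2^(k+1) t⌋`. -/
noncomputable def rademacher (k : ℕ) (t : ℝ) : ℝ :=
  (-1 : ℝ) ^ ⌊(2 : ℝ) ^ (k + 1) * t⌋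

/-!
By Hölder's inequality `‖S‖₂³ ≤ ‖S‖₁ ‖S‖₄²`, so a bound of the fourth moment of `S` by the square
of its second moment turns into a bound of `‖S‖₂` by `‖S‖₁`. For `S = ∑ k < n, r k • a k` with
coefficients in an inner product space, both moments are controlled by induction on `n`: since
`r (k + 1) t = r k (2 t)`, on each half of `[0, 1]` the function `S` is `± a 0` plus a rescaled copy
of a sum with `n - 1` terms, and averaging over the two signs cancels the odd powers of
`⟪a 0, ·⟫`. This gives `‖S‖₂² = ∑ k, ‖a k‖²` and `‖S‖₄⁴ ≤ 3 ‖S‖₂⁴`, hence the constant `1 / √3`.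
-/

open MeasureTheory Set

section Moments

variable {α E : Type*} [MeasurableSpace α] {μ : Measure α} [NormedAddCommGroup E] {f : α → E}

theorem integral_norm_rpow_le_rpow_mul_rpow {q r θ η : ℝ} (hq : 0 < q) (hr : 0 < r) (hθ : 0 < θ)
    (hη : 0 < η) (hθη : θ + η = 1) (hfq : MemLp f (ENNReal.ofReal q) μ)
    (hfr : MemLp f (ENNReal.ofReal r) μ) :
    ∫ x, ‖f x‖ ^ (q * θ + r * η) ∂μ ≤ (∫ x, ‖f x‖ ^ q ∂μ) ^ θ * (∫ x, ‖f x‖ ^ r ∂μ) ^ η := by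
  have memLp_factor {s τ : ℝ} (hs : 0 < s) (hτ : 0 < τ) (hfs : MemLp f (ENNReal.ofReal s) μ) :
      MemLp (fun x ↦ ‖f x‖ ^ (s * τ)) (ENNReal.ofReal τ⁻¹) μ := by
    have h := hfs.norm_rpow_div (ENNReal.ofReal (s * τ))
    rwa [ENNReal.toReal_ofReal (by positivity), ← ENNReal.ofReal_div_of_pos (by positivity),
      show s / (s * τ) = τ⁻¹ by field_simp] at h
  have holder := integral_mul_le_Lp_mul_Lq_of_nonneg (Real.HolderConjugate.inv_inv hθ hη hθη)
    (.of_forall fun x ↦ by positivity) (.of_forall fun x ↦ by positivity)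
    (memLp_factor hq hθ hfq) (memLp_factor hr hη hfr)
  simpa only [← Real.rpow_mul (norm_nonneg _), mul_inv_cancel_right₀ hθ.ne',
    mul_inv_cancel_right₀ hη.ne', one_div, inv_inv,
    ← Real.rpow_add_of_nonneg (norm_nonneg _) (mul_pos hq hθ).le (mul_pos hr hη).le] using holder

theorem integral_norm_sq_pow_three_le (h₁ : MemLp f 1 μ) (h₄ : MemLp f 4 μ) :
    (∫ x, ‖f x‖ ^ 2 ∂μ) ^ 3 ≤ (∫ x, ‖f x‖ ∂μ) ^ 2 * ∫ x, ‖f x‖ ^ 4 ∂μ := by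
  have h : ∫ x, ‖f x‖ ^ 2 ∂μ ≤
      (∫ x, ‖f x‖ ∂μ) ^ (2 / 3 : ℝ) * (∫ x, ‖f x‖ ^ 4 ∂μ) ^ (1 / 3 : ℝ) := by
    have holder := integral_norm_rpow_le_rpow_mul_rpow (f := f) (μ := μ) (q := 1) (r := 4)
      (θ := 2 / 3) (η := 1 / 3) (by norm_num) (by norm_num) (by norm_num) (by norm_num)
      (by norm_num) (by simpa using h₁) (by simpa using h₄)
    have exponent : (1 * (2 / 3) + 4 * (1 / 3) : ℝ) = 2 := by norm_num
    simpa only [exponent, Real.rpow_one, Real.rpow_ofNat] using holder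
  have h₁_nonneg : 0 ≤ ∫ x, ‖f x‖ ∂μ := by positivity
  have h₄_nonneg : 0 ≤ ∫ x, ‖f x‖ ^ 4 ∂μ := by positivity
  calc (∫ x, ‖f x‖ ^ 2 ∂μ) ^ 3
      ≤ ((∫ x, ‖f x‖ ∂μ) ^ (2 / 3 : ℝ) * (∫ x, ‖f x‖ ^ 4 ∂μ) ^ (1 / 3 : ℝ)) ^ 3 := by gcongr
    _ = (∫ x, ‖f x‖ ∂μ) ^ 2 * ∫ x, ‖f x‖ ^ 4 ∂μ := by
      rw [mul_pow, ← Real.rpow_mul_natCast h₁_nonneg, ← Real.rpow_mul_natCast h₄_nonneg]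
      norm_num

theorem sqrt_integral_norm_sq_le_of_integral_norm_pow_four_le {K : ℝ} (h₁ : MemLp f 1 μ)
    (h₄ : MemLp f 4 μ) (hK : ∫ x, ‖f x‖ ^ 4 ∂μ ≤ K * (∫ x, ‖f x‖ ^ 2 ∂μ) ^ 2) :
    √(∫ x, ‖f x‖ ^ 2 ∂μ) ≤ √K * ∫ x, ‖f x‖ ∂μ := by
  have h₁_nonneg : 0 ≤ ∫ x, ‖f x‖ ∂μ := by positivity
  have h₂_nonneg : 0 ≤ ∫ x, ‖f x‖ ^ 2 ∂μ := by positivity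
  rcases h₂_nonneg.eq_or_lt with h₂ | h₂
  · rw [← h₂, Real.sqrt_zero]
    positivity
  have h : ∫ x, ‖f x‖ ^ 2 ∂μ ≤ K * (∫ x, ‖f x‖ ∂μ) ^ 2 := by
    refine le_of_mul_le_mul_right ?_ (pow_pos h₂ 2)
    calc (∫ x, ‖f x‖ ^ 2 ∂μ) * (∫ x, ‖f x‖ ^ 2 ∂μ) ^ 2
        = (∫ x, ‖f x‖ ^ 2 ∂μ) ^ 3 := by ring
      _ ≤ (∫ x, ‖f x‖ ∂μ) ^ 2 * ∫ x, ‖f x‖ ^ 4 ∂μ := integral_norm_sq_pow_three_le h₁ h₄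
      _ ≤ (∫ x, ‖f x‖ ∂μ) ^ 2 * (K * (∫ x, ‖f x‖ ^ 2 ∂μ) ^ 2) := by gcongr
      _ = K * (∫ x, ‖f x‖ ∂μ) ^ 2 * (∫ x, ‖f x‖ ^ 2 ∂μ) ^ 2 := by ring
  calc √(∫ x, ‖f x‖ ^ 2 ∂μ) ≤ √(K * (∫ x, ‖f x‖ ∂μ) ^ 2) := Real.sqrt_le_sqrt h
    _ = √K * ∫ x, ‖f x‖ ∂μ := by
      rw [Real.sqrt_mul' _ (sq_nonneg _), Real.sqrt_sq h₁_nonneg]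

theorem integral_norm_le_sqrt_integral_norm_sq [IsProbabilityMeasure μ] (hf : MemLp f 2 μ) :
    ∫ x, ‖f x‖ ∂μ ≤ √(∫ x, ‖f x‖ ^ 2 ∂μ) := by
  refine Real.le_sqrt_of_sq_le ?_
  have h := ProbabilityTheory.variance_nonneg (fun x ↦ ‖f x‖) μ
  rw [ProbabilityTheory.variance_eq_sub hf.norm] at h
  exact sub_nonneg.1 h

end Moments

theorem norm_add_pow_four_add_norm_sub_pow_four_le {E : Type*} [NormedAddCommGroup E]
    [InnerProductSpace ℝ E] (x y : E) :
    ‖x + y‖ ^ 4 + ‖x - y‖ ^ 4 ≤ 2 * (‖x‖ ^ 4 + 6 * ‖y‖ ^ 2 * ‖x‖ ^ 2 + ‖y‖ ^ 4) := by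
  have cauchy_schwarz : inner ℝ x y ^ 2 ≤ (‖x‖ * ‖y‖) ^ 2 :=
    sq_le_sq' (neg_le_of_abs_le (abs_real_inner_le_norm x y)) (real_inner_le_norm x y)
  calc ‖x + y‖ ^ 4 + ‖x - y‖ ^ 4 = (‖x + y‖ ^ 2) ^ 2 + (‖x - y‖ ^ 2) ^ 2 := by ring
    _ = 2 * ((‖x‖ ^ 2 + ‖y‖ ^ 2) ^ 2 + 4 * inner ℝ x y ^ 2) := by
      rw [norm_add_sq_real, norm_sub_sq_real]
      ring
    _ ≤ 2 * ((‖x‖ ^ 2 + ‖y‖ ^ 2) ^ 2 + 4 * (‖x‖ * ‖y‖) ^ 2) := by gcongr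
    _ = 2 * (‖x‖ ^ 4 + 6 * ‖y‖ ^ 2 * ‖x‖ ^ 2 + ‖y‖ ^ 4) := by ring

theorem measurable_rademacher (k : ℕ) : Measurable (rademacher k) :=
  (measurable_from_top (f := fun z : ℤ ↦ (-1 : ℝ) ^ z)).comp
    (Int.measurable_floor.comp (measurable_id.const_mul _))

theorem norm_rademacher (k : ℕ) (t : ℝ) : ‖rademacher k t‖ = 1 := by
  simp [rademacher]

theorem rademacher_succ (k : ℕ) (t : ℝ) : rademacher (k + 1) t = rademacher k (2 * t) := by
  rw [rademacher, rademacher, pow_succ (2 : ℝ) (k + 1), mul_assoc]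

theorem rademacher_periodic (k : ℕ) : Function.Periodic (rademacher k) 1 := by
  intro t
  have shift : (2 : ℝ) ^ (k + 1) * (t + 1) = 2 ^ (k + 1) * t + ((2 ^ (k + 1) : ℤ) : ℝ) := by
    push_cast
    ring
  have even_shift : Even ((2 : ℤ) ^ (k + 1)) := even_two.pow_of_ne_zero k.succ_ne_zero
  rw [rademacher, rademacher, shift, Int.floor_add_intCast, zpow_add₀ (by norm_num),
    even_shift.neg_one_zpow, mul_one]

theorem rademacher_zero_of_mem_Ico_zero_half {t : ℝ} (ht : t ∈ Ico 0 (1 / 2)) :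
    rademacher 0 t = 1 := by
  have : ⌊(2 : ℝ) ^ (0 + 1) * t⌋ = 0 := by
    rw [Int.floor_eq_iff]
    constructor <;> norm_num <;> linarith [ht.1, ht.2]
  rw [rademacher, this, zpow_zero]

theorem rademacher_zero_of_mem_Ico_half_one {t : ℝ} (ht : t ∈ Ico (1 / 2) 1) :
    rademacher 0 t = -1 := by
  have : ⌊(2 : ℝ) ^ (0 + 1) * t⌋ = 1 := by
    rw [Int.floor_eq_iff]
    constructor <;> norm_num <;> linarith [ht.1, ht.2]
  rw [rademacher, this, zpow_one]

theorem integral_rademacher_zero_two_mul {G : Type*} [NormedAddCommGroup G] [NormedSpace ℝ G]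
    {F : ℝ → ℝ → G} (h_pos : IntervalIntegrable (F 1) volume 0 1)
    (h_neg : IntervalIntegrable (F (-1)) volume 0 1) (h_per : Function.Periodic (F (-1)) 1) :
    ∫ t in (0 : ℝ)..1, F (rademacher 0 t) (2 * t) =
      (2⁻¹ : ℝ) • ((∫ t in (0 : ℝ)..1, F 1 t) + ∫ t in (0 : ℝ)..1, F (-1) t) := by
  have left : EqOn (fun t ↦ F 1 (2 * t)) (fun t ↦ F (rademacher 0 t) (2 * t)) (uIoo 0 (1 / 2)) := by
    rw [uIoo_of_le (by norm_num)]
    intro t ht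
    simp only [rademacher_zero_of_mem_Ico_zero_half (Ioo_subset_Ico_self ht)]
  have right : EqOn (fun t ↦ F (-1) (2 * t)) (fun t ↦ F (rademacher 0 t) (2 * t))
      (uIoo (1 / 2) 1) := by
    rw [uIoo_of_le (by norm_num)]
    intro t ht
    simp only [rademacher_zero_of_mem_Ico_half_one (Ioo_subset_Ico_self ht)]
  have int_left : IntervalIntegrable (fun t ↦ F 1 (2 * t)) volume 0 (1 / 2) := by
    simpa using h_pos.comp_mul_left (c := 2)
  have int_right : IntervalIntegrable (fun t ↦ F (-1) (2 * t)) volume (1 / 2) 1 := by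
    simpa using (h_per.intervalIntegrable₀ one_ne_zero h_neg 1 2).comp_mul_left (c := 2)
  have h_shift : ∫ t in (1 : ℝ)..2, F (-1) t = ∫ t in (0 : ℝ)..1, F (-1) t := by
    simpa [one_add_one_eq_two] using h_per.intervalIntegral_add_eq 1 0
  rw [← intervalIntegral.integral_add_adjacent_intervals
      (int_left.congr_uIoo left) (int_right.congr_uIoo right),
    ← intervalIntegral.integral_congr_uIoo left, ← intervalIntegral.integral_congr_uIoo right,
    intervalIntegral.integral_comp_mul_left _ two_ne_zero,
    intervalIntegral.integral_comp_mul_left _ two_ne_zero, smul_add, ← h_shift]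
  norm_num

section RademacherSum

variable {n : ℕ} {E : Type*} [NormedAddCommGroup E]

/-- The Rademacher sum `∑ k < n, r k • a k` with vector coefficients, as a function on `ℝ`. -/
noncomputable def rademacherSum [NormedSpace ℝ E] (a : Fin n → E) (t : ℝ) : E :=
  ∑ k : Fin n, rademacher k t • a k

section NormedSpace

variable [NormedSpace ℝ E]

theorem rademacherSum_succ (a : Fin (n + 1) → E) (t : ℝ) :
    rademacherSum a t = rademacherSum (Fin.tail a) (2 * t) + rademacher 0 t • a 0 := by
  simp [rademacherSum, Fin.sum_univ_succ, Fin.tail, rademacher_succ, add_comm]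

theorem rademacherSum_periodic (a : Fin n → E) : Function.Periodic (rademacherSum a) 1 := fun t ↦ by
  simp only [rademacherSum, rademacher_periodic _ t]

theorem memLp_rademacherSum (a : Fin n → E) (p : ENNReal) (μ : Measure ℝ) [IsFiniteMeasure μ] :
    MemLp (rademacherSum a) p μ := by
  refine memLp_finsetSum _ fun k _ ↦ MemLp.of_bound ?_ ‖a k‖ (.of_forall fun t ↦ ?_)
  · exact ((measurable_rademacher k).stronglyMeasurable.smul_const _).aestronglyMeasurable
  · rw [norm_smul, norm_rademacher, one_mul]

theorem intervalIntegrable_norm_rademacherSum_add_pow (a : Fin n → E) (x : E) (m : ℕ) (u v : ℝ) :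
    IntervalIntegrable (fun t ↦ ‖rademacherSum a t + x‖ ^ m) volume u v := by
  rw [intervalIntegrable_iff]
  have : IsFiniteMeasure (volume.restrict (uIoc u v)) := ⟨by simp [uIoc]⟩
  exact ((memLp_rademacherSum a m _).add (memLp_const x)).integrable_norm_pow'

theorem integral_norm_rademacherSum_succ_pow (a : Fin (n + 1) → E) (m : ℕ) :
    ∫ t in (0 : ℝ)..1, ‖rademacherSum a t‖ ^ m =
      ∫ t in (0 : ℝ)..1, (‖rademacherSum (Fin.tail a) t + a 0‖ ^ m +
        ‖rademacherSum (Fin.tail a) t - a 0‖ ^ m) / 2 := by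
  have h_int := intervalIntegrable_norm_rademacherSum_add_pow (Fin.tail a)
  have h := integral_rademacher_zero_two_mul
    (F := fun ε t ↦ ‖rademacherSum (Fin.tail a) t + ε • a 0‖ ^ m)
    (h_int _ _ _ _) (h_int _ _ _ _)
    (fun t ↦ by simp only [rademacherSum_periodic _ t])
  simp only [← rademacherSum_succ] at h
  rw [h, ← intervalIntegral.integral_add (h_int _ _ _ _) (h_int _ _ _ _), smul_eq_mul,
    ← intervalIntegral.integral_const_mul]
  simp only [one_smul, neg_one_smul, ← sub_eq_add_neg, div_eq_inv_mul]

end NormedSpace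

variable [InnerProductSpace ℝ E]

theorem integral_norm_rademacherSum_sq (a : Fin n → E) :
    ∫ t in (0 : ℝ)..1, ‖rademacherSum a t‖ ^ 2 = ∑ k, ‖a k‖ ^ 2 := by
  induction n with
  | zero => simp [rademacherSum]
  | succ n ih =>
    have parallelogram (t : ℝ) :
        (‖rademacherSum (Fin.tail a) t + a 0‖ ^ 2 + ‖rademacherSum (Fin.tail a) t - a 0‖ ^ 2) / 2 =
          ‖rademacherSum (Fin.tail a) t‖ ^ 2 + ‖a 0‖ ^ 2 := by
      linarith [parallelogram_law_with_norm ℝ (rademacherSum (Fin.tail a) t) (a 0)]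
    have h_int : IntervalIntegrable (fun t ↦ ‖rademacherSum (Fin.tail a) t‖ ^ 2) volume 0 1 := by
      simpa using intervalIntegrable_norm_rademacherSum_add_pow (Fin.tail a) 0 2 0 1
    simp only [integral_norm_rademacherSum_succ_pow, parallelogram]
    rw [intervalIntegral.integral_add h_int intervalIntegrable_const, ih, Fin.sum_univ_succ,
      add_comm]
    simp [Fin.tail]

theorem integral_norm_rademacherSum_pow_four_le (a : Fin n → E) :
    ∫ t in (0 : ℝ)..1, ‖rademacherSum a t‖ ^ 4 ≤ 3 * (∑ k, ‖a k‖ ^ 2) ^ 2 := by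
  induction n with
  | zero => simp [rademacherSum]
  | succ n ih =>
    set S := rademacherSum (Fin.tail a) with hS
    have h_int (x : E) (m : ℕ) : IntervalIntegrable (fun t ↦ ‖S t + x‖ ^ m) volume 0 1 :=
      intervalIntegrable_norm_rademacherSum_add_pow (Fin.tail a) x m 0 1
    have h_int₂ : IntervalIntegrable (fun t ↦ 6 * ‖a 0‖ ^ 2 * ‖S t‖ ^ 2) volume 0 1 := by
      simpa using (h_int 0 2).const_mul (6 * ‖a 0‖ ^ 2)
    have h_int₄ : IntervalIntegrable (fun t ↦ ‖S t‖ ^ 4) volume 0 1 := by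
      simpa using h_int 0 4
    calc ∫ t in (0 : ℝ)..1, ‖rademacherSum a t‖ ^ 4
        = ∫ t in (0 : ℝ)..1, (‖S t + a 0‖ ^ 4 + ‖S t - a 0‖ ^ 4) / 2 :=
          integral_norm_rademacherSum_succ_pow a 4
      _ ≤ ∫ t in (0 : ℝ)..1, (‖S t‖ ^ 4 + 6 * ‖a 0‖ ^ 2 * ‖S t‖ ^ 2 + ‖a 0‖ ^ 4) := by
          refine intervalIntegral.integral_mono_on zero_le_one ?_
            ((h_int₄.add h_int₂).add intervalIntegrable_const) fun t _ ↦ ?_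
          · simpa only [sub_eq_add_neg] using ((h_int (a 0) 4).add (h_int (-a 0) 4)).div_const 2
          · linarith [norm_add_pow_four_add_norm_sub_pow_four_le (S t) (a 0)]
      _ = (∫ t in (0 : ℝ)..1, ‖S t‖ ^ 4) + 6 * ‖a 0‖ ^ 2 * ∑ k, ‖Fin.tail a k‖ ^ 2 +
            ‖a 0‖ ^ 4 := by
          rw [intervalIntegral.integral_add (h_int₄.add h_int₂) intervalIntegrable_const,
            intervalIntegral.integral_add h_int₄ h_int₂, intervalIntegral.integral_const_mul,
            hS, integral_norm_rademacherSum_sq]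
          simp
      _ ≤ 3 * (∑ k, ‖Fin.tail a k‖ ^ 2) ^ 2 + 6 * ‖a 0‖ ^ 2 * ∑ k, ‖Fin.tail a k‖ ^ 2 +
            3 * ‖a 0‖ ^ 4 := by
          gcongr
          · exact ih (Fin.tail a)
          · linarith [pow_nonneg (norm_nonneg (a 0)) 4]
      _ = 3 * (∑ k, ‖a k‖ ^ 2) ^ 2 := by
          rw [Fin.sum_univ_succ]
          simp only [Fin.tail]
          ring

end RademacherSum

theorem khintchine_L1_rademacher_general {n : ℕ} {E : Type*} [NormedAddCommGroup E]
    [InnerProductSpace ℝ E] (a : Fin n → E) :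
    (√3)⁻¹ * √(∑ k, ‖a k‖ ^ 2) ≤ ∫ t in (0 : ℝ)..1, ‖∑ k : Fin n, rademacher k t • a k‖ ∧
      ∫ t in (0 : ℝ)..1, ‖∑ k : Fin n, rademacher k t • a k‖ ≤ √(∑ k, ‖a k‖ ^ 2) := by
  have : IsProbabilityMeasure (volume.restrict (Ioc (0 : ℝ) 1)) := ⟨by simp⟩
  have h_memLp (p : ENNReal) := memLp_rademacherSum a p (volume.restrict (Ioc 0 1))
  have h_sq := integral_norm_rademacherSum_sq a
  have h_four := integral_norm_rademacherSum_pow_four_le a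
  rw [← h_sq] at h_four ⊢
  simp only [intervalIntegral.integral_of_le zero_le_one] at h_four ⊢
  exact ⟨(inv_mul_le_iff₀ (by positivity)).2
      (sqrt_integral_norm_sq_le_of_integral_norm_pow_four_le (h_memLp 1) (h_memLp 4) h_four),
    integral_norm_le_sqrt_integral_norm_sq (h_memLp 2)⟩

/-- Khintchine inequality in `L¹` for the Rademacher functions: there is a constant `c > 0`
such that for every `n` and every `a : Fin n → ℝ`,
`c · (Σ (a k)²)^{1/2} ≤ ∫₀¹ |Σ a k · r k t| dt ≤ (Σ (a k)²)^{1/2}`. -/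
theorem khintchine_L1_rademacher :
    ∃ c : ℝ, 0 < c ∧ ∀ (n : ℕ) (a : Fin n → ℝ),
      c * Real.sqrt (∑ k, a k ^ 2) ≤ (∫ t in (0:ℝ)..1, |∑ k, a k * rademacher k t|) ∧
      (∫ t in (0:ℝ)..1, |∑ k, a k * rademacher k t|) ≤ Real.sqrt (∑ k, a k ^ 2) :=
  ⟨(√3)⁻¹, by positivity, fun _ a ↦ by
    simpa [mul_comm] using khintchine_L1_rademacher_general a⟩
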